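/- Let 0 < c₁ < ∞, let r ≥ 0 and let ε ∈ (0, c₁). Then there exist real numbers λ ∈ (0,ε) and μ such that −λ²·Φ₂(μ/c₁) = Φ₂(r+μ) − Φ₂(μ), where Φ₂(y) = y·|y|. -/

import Mathlib

/-!
`Φ₂` is a multiplicative bijection of `ℝ`, so the equation reads `Φ₂ (r + μ) = a * Φ₂ μ` with
`a = 1 - λ ^ 2 / Φ₂ c₁ ≠ 1`. Writing `a = Φ₂ κ` with `κ ≠ 1` turns it into the linear equation
`r + μ = κ * μ`, which has exactly one solution for every `λ ≠ 0`.
-/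

theorem existsUnique_map_add_eq_mul_map {K M : Type*} [DivisionRing K] [MulOneClass M]
    (φ : K ≃* M) {a : M} (ha : a ≠ 1) (r : K) : ∃! μ, φ (r + μ) = a * φ μ := by
  obtain ⟨κ, rfl⟩ := φ.surjective a
  have hκ : κ - 1 ≠ 0 := sub_ne_zero.mpr fun h => ha (by rw [h, map_one])
  have linear_iff (μ : K) : φ (r + μ) = φ κ * φ μ ↔ μ = (κ - 1)⁻¹ * r := by
    rw [← map_mul, φ.injective.eq_iff, ← eq_sub_iff_add_eq, ← sub_one_mul,
      eq_inv_mul_iff_mul_eq₀ hκ, eq_comm]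
  simp only [linear_iff, existsUnique_eq]

theorem existsUnique_neg_mul_map_div_eq_map_add_sub_map {K L : Type*} [DivisionRing K] [Field L]
    (φ : K ≃* L) {b : L} {c : K} (hb : b ≠ 0) (hc : c ≠ 0) (r : K) :
    ∃! μ, -b * φ (μ / c) = φ (r + μ) - φ μ := by
  have hφc : φ c ≠ 0 := (map_ne_zero φ).mpr hc
  have ha : 1 - b / φ c ≠ 1 := fun h => div_ne_zero hb hφc (sub_eq_self.mp h)
  have collect_map (μ : K) : -b * φ (μ / c) + φ μ = (1 - b / φ c) * φ μ := by
    rw [map_div₀]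
    ring
  simpa only [eq_sub_iff_add_eq, collect_map, eq_comm] using
    existsUnique_map_add_eq_mul_map φ ha r

theorem sign_self_mul_abs {R : Type*} [Ring R] [LinearOrder R] [IsStrictOrderedRing R] (x : R) :
    SignType.sign (x * |x|) = SignType.sign x := by
  rcases eq_or_ne x 0 with rfl | hx
  · rw [zero_mul]
  · rw [sign_mul, sign_pos (abs_pos.mpr hx), mul_one]

/-- The signed square `Φ₂ y = y * |y|` as a multiplicative automorphism of `ℝ`; its inverse is the
signed square root. -/
noncomputable def signedSq : ℝ ≃* ℝ where
  toFun y := y * |y|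
  invFun y := SignType.sign y * √|y|
  left_inv y := by
    dsimp only
    rw [sign_self_mul_abs, abs_mul, abs_abs, Real.sqrt_mul_self (abs_nonneg y), sign_mul_abs]
  right_inv y := by
    rcases lt_trichotomy y 0 with hy | rfl | hy
    · simp [hy, hy.le, abs_of_neg]
    · simp
    · simp [hy, hy.le, abs_of_pos]
  map_mul' x y := by rw [abs_mul, mul_mul_mul_comm]

theorem stmt19_general {c₁ lam : ℝ} (hc₁ : c₁ ≠ 0) (hlam : lam ≠ 0) (r : ℝ) :
    ∃! μ : ℝ, -(lam ^ 2) * ((μ / c₁) * |μ / c₁|) = (r + μ) * |r + μ| - μ * |μ| :=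
  existsUnique_neg_mul_map_div_eq_map_add_sub_map signedSq (pow_ne_zero 2 hlam) hc₁ r

/-- for `0 < c₁ < ∞`, `r ≥ 0` and `ε ∈ (0,c₁)` there exist `λ ∈ (0,ε)`
and `μ ∈ ℝ` with `−λ²·Φ₂(μ/c₁) = Φ₂(r+μ) − Φ₂(μ)`, where `Φ₂(y) = y·|y|`. -/
theorem stmt19 (c₁ r ε : ℝ) (hc₁ : 0 < c₁) (hr : 0 ≤ r) (hε : 0 < ε) (hε' : ε < c₁) :
    ∃ lam μ : ℝ, 0 < lam ∧ lam < ε ∧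
      -(lam ^ 2) * ((μ / c₁) * |μ / c₁|) = (r + μ) * |r + μ| - μ * |μ| := by
  obtain ⟨μ, hμ, -⟩ := stmt19_general hc₁.ne' (half_pos hε).ne' r
  exact ⟨ε / 2, μ, half_pos hε, half_lt_self hε, hμ⟩
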